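/- For any finite strategic game, the collection (E_i^∞)_{i∈I} of representation-based rationalizable action sets is the largest collection (Q_i)_{i∈I} (Q_i ⊆ A_i) with the property that every a_i ∈ Q_i is a Choquet best response to some capacity ν_i on A_{-i} that believes Q_{-i} = ∏_{j≠i} Q_j: (E_i^∞)_{i∈I} itself has this property, and every collection with this property satisfies Q_i ⊆ E_i^∞ for all i ∈ I. -/

import Mathlib

/-!
A monotone set function that believes an event believes every larger event
(`Capacity.believes_mono`). Hence the map sending a collection `(Q i)` to the best responses
to capacities believing `∏_{j ≠ i} Q j` is monotone for inclusion, and `Ek` iterates it from the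
top collection. The iterates therefore decrease, and by finiteness they stabilize at `Einf`
(`exists_Ek_eq_Einf`), which is thus a fixed point, i.e. has the best-response property. A
collection with the property lies inside its own image, so by induction inside every iterate.
-/

open Classical

noncomputable section

/-- A capacity on a set of states `σ` (all subsets measurable): normalized and monotone. -/
structure Capacity (σ : Type*) where
  toFun : Set σ → ℝ
  empty' : toFun ∅ = 0
  univ' : toFun Set.univ = 1
  mono' : ∀ ⦃E F : Set σ⦄, E ⊆ F → toFun E ≤ toFun F

/-- A set function `ν` believes an event `E` if `ν(Eᶜ ∪ F) = ν F` for every `F ⊆ E`. -/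
def Believes {σ : Type*} (ν : Set σ → ℝ) (E : Set σ) : Prop :=
  ∀ F : Set σ, F ⊆ E → ν (Eᶜ ∪ F) = ν F

/-- The Choquet integral of a finite-range function `g` with respect to the set
function `ν`:  `∑ x ∈ range g, x * (ν {g ≥ x} - ν {g > x})`, which for the distinct
values `x₁ > x₂ > … > xₙ` of `g` equals `∑ᵢ xᵢ (ν(E₁ ∪ ⋯ ∪ Eᵢ) - ν(E₁ ∪ ⋯ ∪ Eᵢ₋₁))`
where `Eᵢ = {s | g s = xᵢ}`. (Defined as `0` in the degenerate infinite-range case.) -/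
def choquetInt {σ : Type*} (ν : Set σ → ℝ) (g : σ → ℝ) : ℝ :=
  if hf : (Set.range g).Finite then
    ∑ x ∈ hf.toFinset, x * (ν {s | x ≤ g s} - ν {s | x < g s})
  else 0

variable {I : Type} [Fintype I] [DecidableEq I]

/-- Profiles of the opponents of player `i`. -/
abbrev Opp (A : I → Type) (i : I) : Type := ∀ j : {j : I // j ≠ i}, A j.val

variable (A : I → Type) [∀ i, Fintype (A i)] [∀ i, Nonempty (A i)]
  (U : ∀ i, (∀ j, A j) → ℝ)

/-- Combine an action of player `i` with a profile of opponents' actions. -/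
def extendProf (i : I) (a : A i) (b : Opp A i) : ∀ j, A j :=
  fun j => if h : j = i then cast (congrArg A h.symm) a else b ⟨j, h⟩

/-- The payoff to `i` from action `a`, as a function of opponents' profiles. -/
def payoff (i : I) (a : A i) : Opp A i → ℝ :=
  fun b => U i (extendProf A i a b)

/-- `a` is a Choquet best response to the capacity (set function) `ν` on `A₋ᵢ`. -/
def IsCBR (i : I) (ν : Set (Opp A i) → ℝ) (a : A i) : Prop :=
  ∀ a' : A i, choquetInt ν (payoff A U i a') ≤ choquetInt ν (payoff A U i a)

/-- The product `∏_{j ≠ i} Q j` viewed as a set of opponents' profiles. -/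
def prodSet {τ : I → Type} (i : I) (Q : ∀ j, Set (τ j)) :
    Set (∀ j : {j : I // j ≠ i}, τ j.val) :=
  {b | ∀ j, b j ∈ Q j.val}

/-- The inductive definition of Choquet rationalizability: `(CR k).1 i` is the
set `C_i^{k+1}` of capacities and `(CR k).2 i` is the set `R_i^{k+1}` of actions
(indices shifted by one: Lean level `k` is paper level `k+1`). -/
def CR : ℕ → (∀ i, Set (Capacity (Opp A i))) × (∀ i, Set (A i))
  | 0 =>
      ⟨fun _ => Set.univ,
       fun i => {a | ∃ ν ∈ (Set.univ : Set (Capacity (Opp A i))), IsCBR A U i ν.toFun a}⟩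
  | k + 1 =>
      let p := CR k
      let C : ∀ i, Set (Capacity (Opp A i)) :=
        fun i => {ν ∈ p.1 i | Believes ν.toFun (prodSet i p.2)}
      ⟨C, fun i => {a | ∃ ν ∈ C i, IsCBR A U i ν.toFun a}⟩

/-- `Rk k i` is the set `R_i^{k+1}` of level-`(k+1)` Choquet rationalizable actions. -/
def Rk (k : ℕ) (i : I) : Set (A i) := (CR A U k).2 i

/-- `Rinf i = R_i^∞`, the Choquet rationalizable actions of player `i`. -/
def Rinf (i : I) : Set (A i) := ⋂ k, Rk A U k i

/-- Epstein's representation-based rationalizability: `Ek 0 i = Aᵢ` and `Ek (k+1) i`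
consists of the actions that are Choquet best responses to some capacity on `A₋ᵢ`
that believes `E₋ᵢᵏ = ∏_{j ≠ i} Ek k j`. -/
def Ek : ℕ → ∀ i, Set (A i)
  | 0 => fun _ => Set.univ
  | k + 1 => fun i =>
      {a | ∃ ν : Capacity (Opp A i),
        Believes ν.toFun (prodSet i (Ek k)) ∧ IsCBR A U i ν.toFun a}

/-- `E_i^∞ = ⋂ₖ E_i^k`, the representation-based rationalizable actions. -/
def Einf (i : I) : Set (A i) := ⋂ k, Ek A U k i
/-- A collection `(Q i)_{i ∈ I}` of action sets has the best-response property if every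
`a ∈ Q i` is a Choquet best response to some capacity on `A₋ᵢ` that believes `Q₋ᵢ`. -/
def BRProp (Q : ∀ i, Set (A i)) : Prop :=
  ∀ i, ∀ a ∈ Q i, ∃ ν : Capacity (Opp A i),
    Believes ν.toFun (prodSet i Q) ∧ IsCBR A U i ν.toFun a

/-- Belief is inherited by larger events: for `F ⊆ E'`, monotonicity squeezes `ν F` and
`ν (E'ᶜ ∪ F)` between `ν (F ∩ E)` and `ν (Eᶜ ∪ (F ∩ E))`, which agree when `ν` believes `E`. -/
theorem Capacity.believes_mono {σ : Type*} (ν : Capacity σ) {E E' : Set σ} (hE : E ⊆ E')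
    (h : Believes ν.toFun E) : Believes ν.toFun E' := by
  intro F _
  apply le_antisymm _ (ν.mono' Set.subset_union_right)
  calc ν.toFun (E'ᶜ ∪ F) ≤ ν.toFun (Eᶜ ∪ (F ∩ E)) := by
        apply ν.mono'
        rintro x (hx | hx)
        · exact Or.inl fun hxE => hx (hE hxE)
        · by_cases hxE : x ∈ E
          · exact Or.inr ⟨hx, hxE⟩
          · exact Or.inl hxE
    _ = ν.toFun (F ∩ E) := h _ Set.inter_subset_right
    _ ≤ ν.toFun F := ν.mono' Set.inter_subset_left

theorem prodSet_mono {J : Type} {τ : J → Type} (i : J) {Q Q' : ∀ j, Set (τ j)}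
    (h : ∀ j, Q j ⊆ Q' j) : prodSet i Q ⊆ prodSet i Q' :=
  fun _ hb j => h j.val (hb j)

theorem Ek_succ_subset (k : ℕ) : ∀ i, Ek A U (k + 1) i ⊆ Ek A U k i := by
  induction k with
  | zero => exact fun i => Set.subset_univ _
  | succ k ih =>
    rintro i a ⟨ν, hν, ha⟩
    exact ⟨ν, ν.believes_mono (prodSet_mono i ih) hν, ha⟩

theorem Ek_antitone : Antitone (Ek A U) :=
  antitone_nat_of_succ_le fun k i => Ek_succ_subset A U k i

/-- Since the game is finite, the elimination process stops after finitely many rounds. -/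
theorem exists_Ek_eq_Einf : ∃ n, ∀ m, n ≤ m → Ek A U m = Einf A U := by
  obtain ⟨n, hn⟩ := WellFoundedGT.monotone_chain_condition
    (α := (∀ i, Set (A i))ᵒᵈ) ⟨fun k => OrderDual.toDual (Ek A U k), Ek_antitone A U⟩
  have hn' : ∀ m, n ≤ m → Ek A U n = Ek A U m := fun m hm => hn m hm
  refine ⟨n, fun m hm => ?_⟩
  rw [← hn' m hm]
  funext i
  apply Set.Subset.antisymm
  · refine Set.subset_iInter fun k => ?_
    rcases le_total n k with hk | hk
    · rw [hn' k hk]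
    · exact Ek_antitone A U hk i
  · exact Set.iInter_subset _ n

/-- `(E_i^∞)_{i ∈ I}` is the largest collection with the best-response
property: it has the property, and any collection with the property is contained in it. -/
theorem representation_based_is_largest [Nonempty I] :
    BRProp A U (fun i => Einf A U i) ∧
      ∀ Q : ∀ i, Set (A i), BRProp A U Q → ∀ i, Q i ⊆ Einf A U i := by
  constructor
  · intro i a ha
    obtain ⟨n, hn⟩ := exists_Ek_eq_Einf A U
    have ha' : a ∈ Ek A U (n + 1) i := Set.mem_iInter.mp ha (n + 1)
    obtain ⟨ν, hν, hbr⟩ := ha'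
    rw [hn n le_rfl] at hν
    exact ⟨ν, hν, hbr⟩
  · intro Q hQ
    have hk : ∀ k i, Q i ⊆ Ek A U k i := by
      intro k
      induction k with
      | zero => exact fun i => Set.subset_univ _
      | succ k ih =>
        intro i a ha
        obtain ⟨ν, hν, hbr⟩ := hQ i a ha
        exact ⟨ν, ν.believes_mono (prodSet_mono i ih) hν, hbr⟩
    exact fun i => Set.subset_iInter fun k => hk k i

end
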